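/- arXiv:1609.00595 — 2 statements merged into one kernel-verified Lean document; each statement's English description precedes it below -/
import Mathlib

section
/- Let P be a co-rooted finite poset and Q any finite poset, and K a field. Then the ideal J_{P,Q} is generated by squarefree binomials, i.e. J_{P,Q} equals the ideal of T generated by the squarefree binomials it contains. -/
open MvPolynomial

/-- The `K`-algebra map sending the variable `t_φ` (indexed by an isotone map
`φ : P →o Q`) to the monomial `∏_{p ∈ P} x_{p, φ(p)}`. -/
noncomputable def isotonianMap (K P Q : Type) [Field K] [PartialOrder P] [Fintype P]
    [PartialOrder Q] [Fintype Q] :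
    MvPolynomial (P →o Q) K →ₐ[K] MvPolynomial (P × Q) K :=
  aeval fun φ : P →o Q => ∏ p : P, X (p, φ p)

/-- The defining ideal `J_{P,Q}` of the isotonian algebra `K[P,Q]`. -/
noncomputable def isotonianIdeal (K P Q : Type) [Field K] [PartialOrder P] [Fintype P]
    [PartialOrder Q] [Fintype Q] :
    Ideal (MvPolynomial (P →o Q) K) :=
  RingHom.ker (isotonianMap K P Q)

/-- A binomial `monomial u 1 - monomial v 1` which is squarefree: all exponents are at most 1. -/
def IsSquarefreeBinomial {σ K : Type} [Field K] (f : MvPolynomial σ K) : Prop :=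
  ∃ u v : σ →₀ ℕ, (∀ i, u i ≤ 1) ∧ (∀ i, v i ≤ 1) ∧ f = monomial u 1 - monomial v 1

namespace Iso7

/-- Equal marginals. -/
def Marg {P Q : Type} [PartialOrder P] [PartialOrder Q] (s t : Multiset (P →o Q)) : Prop :=
  ∀ p : P, s.map (fun φ => φ p) = t.map (fun φ => φ p)

/-- A squarefree move. -/
def Step {P Q : Type} [PartialOrder P] [PartialOrder Q] (s t : Multiset (P →o Q)) : Prop :=
  ∃ a b r : Multiset (P →o Q), s = a + r ∧ t = b + r ∧ a.Nodup ∧ b.Nodup ∧ Marg a b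

theorem Step.add {P Q : Type} [PartialOrder P] [PartialOrder Q] {s t : Multiset (P →o Q)}
    (h : Step s t) (c : Multiset (P →o Q)) : Step (c + s) (c + t) := by
  obtain ⟨a, b, r, rfl, rfl, ha, hb, hm⟩ := h
  exact ⟨a, b, c + r, by abel, by abel, ha, hb, hm⟩

theorem Step.marg {P Q : Type} [PartialOrder P] [PartialOrder Q] {s t : Multiset (P →o Q)}
    (h : Step s t) : Marg s t := by
  obtain ⟨a, b, r, rfl, rfl, ha, hb, hm⟩ := h
  intro p
  simp [hm p]

theorem exists_cycle {H A B : Type} (f : H → A) (g : H → B) (s t : Multiset H) (hs : s ≠ 0)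
    (hf : s.map f = t.map f) (hg : s.map g = t.map g) :
    ∃ a b : Multiset H, a ≠ 0 ∧ a ≤ s ∧ b ≤ t ∧ a.Nodup ∧ b.Nodup ∧
      a.map f = b.map f ∧ a.map g = b.map g := by
  classical
  have h1 : ∀ x : A, ∃ hk : H × H, x ∈ s.map f →
      hk.1 ∈ s ∧ f hk.1 = x ∧ hk.2 ∈ t ∧ g hk.2 = g hk.1 := by
    intro x
    obtain ⟨h0, _⟩ := Multiset.exists_mem_of_ne_zero hs
    by_cases hx : x ∈ s.map f
    · obtain ⟨h, hh, rfl⟩ := Multiset.mem_map.1 hx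
      have : g h ∈ t.map g := hg ▸ Multiset.mem_map_of_mem g hh
      obtain ⟨k, hk, e⟩ := Multiset.mem_map.1 this
      exact ⟨(h, k), fun _ => ⟨hh, rfl, hk, e⟩⟩
    · exact ⟨(h0, h0), fun h => absurd h hx⟩
  choose hk hhk using h1
  let next : A → A := fun x => f (hk x).2
  have hnext : ∀ x ∈ s.map f, next x ∈ s.map f := by
    intro x hx
    rw [hf]
    exact Multiset.mem_map_of_mem f (hhk x hx).2.2.1
  let S : Finset (Finset A) := (s.map f).toFinset.powerset.filter
    (fun C => C.Nonempty ∧ C.image next ⊆ C)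
  have hS : S.Nonempty := by
    refine ⟨(s.map f).toFinset, ?_⟩
    simp only [S, Finset.mem_filter, Finset.mem_powerset]
    refine ⟨subset_rfl, ?_, ?_⟩
    · obtain ⟨h0, hh0⟩ := Multiset.exists_mem_of_ne_zero hs
      exact ⟨f h0, Multiset.mem_toFinset.2 (Multiset.mem_map_of_mem f hh0)⟩
    · intro y hy
      obtain ⟨x, hx, rfl⟩ := Finset.mem_image.1 hy
      exact Multiset.mem_toFinset.2 (hnext x (Multiset.mem_toFinset.1 hx))
  obtain ⟨C, hC, hmin⟩ := Finset.exists_min_image S Finset.card hS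
  simp only [S, Finset.mem_filter, Finset.mem_powerset] at hC hmin
  obtain ⟨hCs, hCne, hCinv⟩ := hC
  have himg : C.image next = C := by
    apply Finset.eq_of_subset_of_card_le hCinv
    exact hmin _ ⟨hCinv.trans hCs, hCne.image _, Finset.image_subset_image hCinv⟩
  have hinj : Set.InjOn next C := Finset.card_image_iff.1 (by rw [himg])
  have hmem : ∀ x ∈ C, x ∈ s.map f := fun x hx => Multiset.mem_toFinset.1 (hCs hx)
  have hCf : (C.val.map fun x => (hk x).1).map f = C.val := by
    rw [Multiset.map_map]
    conv_rhs => rw [← Multiset.map_id C.val]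
    exact Multiset.map_congr rfl fun x hx => (hhk x (hmem x hx)).2.1
  have hCk : (C.val.map fun x => (hk x).2).map f = C.val := by
    rw [Multiset.map_map]
    have := Finset.image_val_of_injOn hinj
    rw [himg] at this
    exact this.symm
  have hn1 : (C.val.map fun x => (hk x).1).Nodup := Multiset.Nodup.of_map f (by rw [hCf]; exact C.nodup)
  have hn2 : (C.val.map fun x => (hk x).2).Nodup := Multiset.Nodup.of_map f (by rw [hCk]; exact C.nodup)
  refine ⟨C.val.map fun x => (hk x).1, C.val.map fun x => (hk x).2, ?_, ?_, ?_, hn1, hn2,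
    hCf.trans hCk.symm, ?_⟩
  · simpa using hCne.ne_empty
  · rw [Multiset.le_iff_subset hn1]
    intro y hy
    obtain ⟨x, hx, rfl⟩ := Multiset.mem_map.1 hy
    exact (hhk x (hmem x hx)).1
  · rw [Multiset.le_iff_subset hn2]
    intro y hy
    obtain ⟨x, hx, rfl⟩ := Multiset.mem_map.1 hy
    exact (hhk x (hmem x hx)).2.2.1
  · rw [Multiset.map_map, Multiset.map_map]
    exact Multiset.map_congr rfl fun x hx => (hhk x (hmem x hx)).2.2.2.symm

theorem bip {P Q A B : Type} [PartialOrder P] [PartialOrder Q] (f : (P →o Q) → A)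
    (g : (P →o Q) → B)
    (hfg : ∀ a b : Multiset (P →o Q), a.map f = b.map f → a.map g = b.map g → Marg a b) :
    ∀ (n : ℕ) (s t : Multiset (P →o Q)), s.card = n → s.map f = t.map f → s.map g = t.map g →
      Relation.ReflTransGen Step s t := by
  intro n
  induction n using Nat.strong_induction_on with
  | _ n ih =>
    intro s t hn hf hg
    by_cases hs : s = 0
    · subst hs
      have : t = 0 := by simpa using hf.symm
      rw [this]
    · obtain ⟨a, b, ha0, ha, hb, han, hbn, habf, habg⟩ := exists_cycle f g s t hs hf hg
      obtain ⟨s', rfl⟩ := Multiset.le_iff_exists_add.1 ha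
      obtain ⟨t', rfl⟩ := Multiset.le_iff_exists_add.1 hb
      have hf' : s'.map f = t'.map f := by
        rw [Multiset.map_add, Multiset.map_add, habf] at hf
        exact add_left_cancel hf
      have hg' : s'.map g = t'.map g := by
        rw [Multiset.map_add, Multiset.map_add, habg] at hg
        exact add_left_cancel hg
      have hlt : s'.card < n := by
        rw [← hn, Multiset.card_add]
        have := Multiset.card_pos.2 ha0
        omega
      have h1 : Step (a + s') (b + s') := ⟨a, b, s', rfl, rfl, han, hbn, hfg _ _ habf habg⟩
      have h2 := ih _ hlt s' t' rfl hf' hg'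
      exact Relation.ReflTransGen.head h1 (h2.lift (fun x => b + x) (fun x y h => h.add b))

/-- Restriction to the complement of a point. -/
def res {P Q : Type} [PartialOrder P] [PartialOrder Q] (p : P) (φ : P →o Q) :
    {x : P // x ≠ p} →o Q :=
  ⟨fun x => φ x.1, fun _ _ h => φ.monotone h⟩

theorem map_split {α β : Type} (f : α → β) (a' r' : Multiset β) :
    ∀ (s : Multiset α), s.map f = a' + r' →
    ∃ a r, s = a + r ∧ a.map f = a' ∧ r.map f = r' := by
  induction a' using Multiset.induction_on with
  | empty => intro s h; exact ⟨0, s, by simp, by simp, by simpa using h⟩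
  | cons x a' ih =>
    intro s h
    have hx : x ∈ s.map f := by rw [h]; simp
    obtain ⟨y, hy, rfl⟩ := Multiset.mem_map.1 hx
    obtain ⟨s', rfl⟩ := Multiset.exists_cons_of_mem hy
    rw [Multiset.map_cons, Multiset.cons_add] at h
    obtain ⟨a, r, rfl, h1, h2⟩ := ih s' ((Multiset.cons_inj_right _).1 h)
    exact ⟨y ::ₘ a, r, by simp, by simp [h1], h2⟩

theorem exists_ext {P Q : Type} [PartialOrder P] [PartialOrder Q] (p p' : P)
    (hmin : ∀ x, x ≤ p → x = p) (hpp : p' ≠ p) (hcov : ∀ x, p ≤ x → x ≠ p → p' ≤ x)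
    (y : {x : P // x ≠ p} →o Q) (q : Q) (hq : q ≤ y ⟨p', hpp⟩) :
    ∃ φ : P →o Q, res p φ = y ∧ φ p = q := by
  classical
  refine ⟨⟨fun x => if h : x = p then q else y ⟨x, h⟩, ?_⟩, ?_, ?_⟩
  · intro x z hxz
    by_cases hx : x = p
    · subst hx
      by_cases hz : z = x
      · simp [hz]
      · simp only [hz, dite_true, dite_false]
        exact hq.trans (y.monotone (hcov z hxz hz))
    · have hz : z ≠ p := by
        rintro rfl
        exact hx (hmin x hxz)
      simp only [hx, hz, dite_false]
      exact y.monotone hxz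
  · ext x
    simp [res, x.2]
  · simp

theorem rel_ext {P Q : Type} [PartialOrder P] [PartialOrder Q] (p p' : P)
    (hmin : ∀ x, x ≤ p → x = p) (hpp : p' ≠ p) (hle : p ≤ p')
    (hcov : ∀ x, p ≤ x → x ≠ p → p' ≤ x)
    (a : Multiset (P →o Q)) (b' : Multiset ({x : P // x ≠ p} →o Q))
    (h : Multiset.Rel (fun (x : P →o Q) (y : {x : P // x ≠ p} →o Q) => x p' = y ⟨p', hpp⟩) a b') :
    ∃ b : Multiset (P →o Q), b.map (res p) = b' ∧
      a.map (fun φ => φ p) = b.map (fun φ => φ p) := by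
  induction h with
  | zero => exact ⟨0, by simp, by simp⟩
  | cons hxy _ ih =>
    rename_i x y _ _ _
    obtain ⟨b, h1, h2⟩ := ih
    obtain ⟨φ, h3, h4⟩ := exists_ext p p' hmin hpp hcov y (x p) (hxy ▸ x.monotone hle)
    exact ⟨φ ::ₘ b, by simp [h1, h3], by simp [h2, h4]⟩

theorem marg_of {P Q : Type} [PartialOrder P] [PartialOrder Q] (p : P)
    (a b : Multiset (P →o Q)) (h1 : Marg (a.map (res p)) (b.map (res p)))
    (h2 : a.map (fun φ => φ p) = b.map (fun φ => φ p)) : Marg a b := by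
  intro x
  by_cases hx : x = p
  · rw [hx]; exact h2
  · have := h1 ⟨x, hx⟩
    rw [Multiset.map_map, Multiset.map_map] at this
    exact this

theorem lift_step {P Q : Type} [PartialOrder P] [PartialOrder Q] (p p' : P)
    (hmin : ∀ x, x ≤ p → x = p) (hpp : p' ≠ p) (hle : p ≤ p')
    (hcov : ∀ x, p ≤ x → x ≠ p → p' ≤ x)
    (s : Multiset (P →o Q)) (t' : Multiset ({x : P // x ≠ p} →o Q))
    (h : Step (s.map (res p)) t') : ∃ t, Step s t ∧ t.map (res p) = t' := by
  obtain ⟨a', b', r', hs, rfl, ha, hb, hm⟩ := h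
  obtain ⟨a, r, rfl, rfl, rfl⟩ := map_split _ _ _ _ hs
  have h1 := hm ⟨p', hpp⟩
  rw [Multiset.map_map, ← Multiset.rel_eq, Multiset.rel_map] at h1
  obtain ⟨b, rfl, h2⟩ := rel_ext p p' hmin hpp hle hcov a b' h1
  exact ⟨b + r, ⟨a, b, r, rfl, rfl, ha.of_map, hb.of_map, marg_of p a b hm h2⟩, by simp⟩

theorem lift_path {P Q : Type} [PartialOrder P] [PartialOrder Q] (p p' : P)
    (hmin : ∀ x, x ≤ p → x = p) (hpp : p' ≠ p) (hle : p ≤ p')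
    (hcov : ∀ x, p ≤ x → x ≠ p → p' ≤ x)
    (s : Multiset (P →o Q)) (t' : Multiset ({x : P // x ≠ p} →o Q))
    (h : Relation.ReflTransGen Step (s.map (res p)) t') :
    ∃ t, Relation.ReflTransGen Step s t ∧ t.map (res p) = t' := by
  induction h with
  | refl => exact ⟨s, .refl, rfl⟩
  | tail _ h2 ih =>
    obtain ⟨t, h3, rfl⟩ := ih
    obtain ⟨w, h4, h5⟩ := lift_step p p' hmin hpp hle hcov _ _ h2
    exact ⟨w, h3.tail h4, h5⟩

theorem path_marg {P Q : Type} [PartialOrder P] [PartialOrder Q] {s t : Multiset (P →o Q)}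
    (h : Relation.ReflTransGen Step s t) : Marg s t := by
  induction h with
  | refl => exact fun _ => rfl
  | tail _ h2 ih => exact fun p => (ih p).trans (h2.marg p)

theorem connected {Q : Type} [PartialOrder Q] : ∀ (n : ℕ) (P : Type) [PartialOrder P] [Fintype P],
    Fintype.card P = n → (∃ p₀ : P, ∀ x : P, x ≤ p₀) →
    (∀ a b c : P, c ≤ a → c ≤ b → a ≤ b ∨ b ≤ a) →
    ∀ s t : Multiset (P →o Q), Marg s t → Relation.ReflTransGen Step s t := by
  classical
  intro n
  induction n with
  | zero =>
    intro P _ _ hc hmax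
    obtain ⟨p₀, _⟩ := hmax
    exact absurd hc (have : Nonempty P := ⟨p₀⟩; Fintype.card_ne_zero)
  | succ n ih =>
    intro P _ _ hc hmax hco s t hm
    obtain ⟨p₀, hp₀⟩ := hmax
    obtain ⟨p, -, hpmin⟩ := (Finset.univ : Finset P).exists_le_minimal (Finset.mem_univ p₀)
    have hmin : ∀ x, x ≤ p → x = p := fun x hx =>
      le_antisymm hx (hpmin.2 (Finset.mem_univ x) hx)
    by_cases hp : p = p₀
    · subst hp
      have hall : ∀ x, x = p := fun x => hmin x (hp₀ x)
      have hinj : Function.Injective (fun φ : P →o Q => φ p) := by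
        intro φ ψ h
        ext x
        rw [hall x]
        exact h
      rw [Multiset.map_injective hinj (hm p)]
    · obtain ⟨p', hp'⟩ := (Finset.univ.filter (fun x : P => p ≤ x ∧ x ≠ p)).exists_minimal
        ⟨p₀, by simp [hp₀ p, Ne.symm hp]⟩
      have hp'1 := hp'.1
      have hp'2 := hp'.2
      simp only [Finset.mem_filter, Finset.mem_univ, true_and] at hp'1 hp'2
      have hcov : ∀ x, p ≤ x → x ≠ p → p' ≤ x := by
        intro x h1 h2
        rcases hco p' x p hp'1.1 h1 with h | h
        · exact h
        · exact hp'2 ⟨h1, h2⟩ h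
      have hcard : Fintype.card {x : P // x ≠ p} = n := by
        rw [Fintype.card_subtype_compl, hc, Fintype.card_subtype_eq]; rfl
      have hpath := ih {x : P // x ≠ p} hcard ⟨⟨p₀, Ne.symm hp⟩, fun x => hp₀ x.1⟩
        (fun a b c => hco a.1 b.1 c.1) (s.map (res p)) (t.map (res p)) (by
          intro x
          rw [Multiset.map_map, Multiset.map_map]
          exact hm x.1)
      obtain ⟨w, h1, h2⟩ := lift_path p p' hmin hp'1.2 hp'1.1 hcov _ _ hpath
      refine h1.trans (bip (res p) (fun φ => φ p) ?_ _ w t rfl h2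
        ((path_marg h1 p).symm.trans (hm p)))
      intro a b h3 h4
      exact marg_of p a b (by rw [h3]; exact fun _ => rfl) h4

open Classical in
/-- The monomial of a multiset. -/
noncomputable def mon (K : Type) [Field K] {σ : Type} (s : Multiset σ) : MvPolynomial σ K :=
  monomial (Multiset.toFinsupp s) 1

theorem mon_add (K : Type) [Field K] {σ : Type} (s t : Multiset σ) :
    mon K (s + t) = mon K s * mon K t := by
  simp [mon, monomial_mul]

theorem mon_eq (K : Type) [Field K] {σ : Type} (s : Multiset σ) :
    mon K s = (s.map X).prod := by
  induction s using Multiset.induction_on with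
  | empty => simp [mon]
  | cons x s ih =>
    rw [← Multiset.singleton_add, mon_add, ih]
    simp [mon, X]

/-- Exponent of the image. -/
def img {P Q : Type} [PartialOrder P] [Fintype P] [PartialOrder Q] (s : Multiset (P →o Q)) :
    Multiset (P × Q) :=
  s.bind fun φ => Finset.univ.val.map fun p => (p, φ p)

theorem map_mon (K P Q : Type) [Field K] [PartialOrder P] [Fintype P]
    [PartialOrder Q] [Fintype Q] (s : Multiset (P →o Q)) :
    isotonianMap K P Q (mon K s) = mon K (img s) := by
  induction s using Multiset.induction_on with
  | empty => simp [mon, img]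
  | cons x s ih =>
    rw [← Multiset.singleton_add, mon_add, map_mul, ih]
    have : img ({x} + s) = (Finset.univ.val.map fun p => (p, x p)) + img s := by simp [img]
    rw [this, mon_add, mon_eq K {x}, mon_eq K (Multiset.map _ _), Multiset.map_map]
    simp [isotonianMap]

theorem img_filter {P Q : Type} [PartialOrder P] [Fintype P] [PartialOrder Q] [DecidableEq P]
    (s : Multiset (P →o Q)) (p : P) :
    ((img s).filter (fun z => z.1 = p)).map Prod.snd = s.map (fun φ => φ p) := by
  induction s using Multiset.induction_on with
  | empty => simp [img]
  | cons x s ih =>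
    have : img (x ::ₘ s) = (Finset.univ.val.map fun p => (p, x p)) + img s := by simp [img]
    rw [this, Multiset.filter_add, Multiset.map_add, ih, Multiset.map_cons,
      ← Multiset.singleton_add, Multiset.filter_map, Multiset.map_map]
    congr 1
    have h : (Finset.univ.val.filter ((fun z : P × Q => z.1 = p) ∘ fun p => (p, x p))) = {p} := by
      have : (Finset.univ.filter (fun y : P => y = p)) = {p} := by ext; simp
      exact congrArg Finset.val this
    rw [h]
    simp

theorem marg_iff {P Q : Type} [PartialOrder P] [Fintype P] [PartialOrder Q]
    (s t : Multiset (P →o Q)) (h : img s = img t) : Marg s t := by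
  classical
  intro p
  rw [← img_filter, ← img_filter, h]

theorem img_eq {P Q : Type} [PartialOrder P] [Fintype P] [PartialOrder Q]
    (s t : Multiset (P →o Q)) (h : Marg s t) : img s = img t := by
  unfold img
  rw [Multiset.bind_map_comm s, Multiset.bind_map_comm t]
  refine Multiset.bind_congr fun p _ => ?_
  have := congrArg (Multiset.map (fun q => (p, q))) (h p)
  rw [Multiset.map_map, Multiset.map_map] at this
  exact this

end Iso7

open Iso7 in
/-- If `P` is co-rooted, then `J_{P,Q}` is generated by the squarefree binomials it contains. -/
theorem statement7 (K P Q : Type) [Field K] [PartialOrder P] [Fintype P]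
    [PartialOrder Q] [Fintype Q]
    (hmax : ∃ p₀ : P, ∀ x : P, x ≤ p₀)
    (hcoroot : ∀ a b c : P, c ≤ a → c ≤ b → a ≤ b ∨ b ≤ a) :
    isotonianIdeal K P Q =
      Ideal.span {f | f ∈ isotonianIdeal K P Q ∧ IsSquarefreeBinomial f} := by
  classical
  apply le_antisymm
  swap
  · exact Ideal.span_le.2 fun f hf => hf.1
  set I := Ideal.span {f | f ∈ isotonianIdeal K P Q ∧ IsSquarefreeBinomial f} with hI
  have hstep : ∀ s t : Multiset (P →o Q), Step s t → mon K s - mon K t ∈ I := by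
    rintro s t ⟨a, b, r, rfl, rfl, ha, hb, hm⟩
    rw [mon_add, mon_add, ← sub_mul]
    apply Ideal.mul_mem_right
    apply Ideal.subset_span
    refine ⟨?_, Multiset.toFinsupp a, Multiset.toFinsupp b, ?_, ?_, ?_⟩
    · rw [isotonianIdeal, RingHom.mem_ker, map_sub, map_mon, map_mon, img_eq a b hm, sub_self]
    · intro i
      rw [Multiset.toFinsupp_apply]
      exact Multiset.nodup_iff_count_le_one.1 ha i
    · intro i
      rw [Multiset.toFinsupp_apply]
      exact Multiset.nodup_iff_count_le_one.1 hb i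
    · unfold mon
      congr!
  have hpath : ∀ s t : Multiset (P →o Q), Relation.ReflTransGen Step s t →
      Ideal.Quotient.mk I (mon K s) = Ideal.Quotient.mk I (mon K t) := by
    intro s t h
    induction h with
    | refl => rfl
    | tail _ h2 ih => exact ih.trans (Ideal.Quotient.eq.2 (hstep _ _ h2))
  have hmk : ∀ s t : Multiset (P →o Q), img s = img t →
      Ideal.Quotient.mk I (mon K s) = Ideal.Quotient.mk I (mon K t) := fun s t h =>
    hpath s t (connected _ P rfl hmax hcoroot s t (marg_iff s t h))
  let ρ : Multiset (P × Q) → Multiset (P →o Q) := Function.invFun img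
  have hρ : ∀ s : Multiset (P →o Q), img (ρ (img s)) = img s := fun s =>
    Function.invFun_eq ⟨s, rfl⟩
  let L : MvPolynomial (P × Q) K →ₗ[K] (MvPolynomial (P →o Q) K ⧸ I) :=
    (basisMonomials (P × Q) K).constr K
      (fun w => Ideal.Quotient.mk I (mon K (ρ (Finsupp.toMultiset w))))
  have hL : ∀ m : Multiset (P × Q), L (mon K m) = Ideal.Quotient.mk I (mon K (ρ m)) := by
    intro m
    have h := (basisMonomials (P × Q) K).constr_basis K
      (fun w => Ideal.Quotient.mk I (mon K (ρ (Finsupp.toMultiset w)))) (Multiset.toFinsupp m)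
    rw [coe_basisMonomials] at h
    simp only [Multiset.toFinsupp_toMultiset] at h
    rw [← h]
    unfold mon
    congr!
  have hcomp : L ∘ₗ (isotonianMap K P Q).toLinearMap = (Ideal.Quotient.mkₐ K I).toLinearMap := by
    apply (basisMonomials (P →o Q) K).ext
    intro u
    have hu : basisMonomials (P →o Q) K u = mon K (Finsupp.toMultiset u) := by
      rw [coe_basisMonomials]
      have h := Finsupp.toMultiset_toFinsupp u
      unfold mon
      conv_lhs => rw [← h]
      congr!
    rw [hu, LinearMap.comp_apply, AlgHom.toLinearMap_apply, map_mon, hL]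
    exact hmk _ _ (hρ _)
  intro f hf
  rw [isotonianIdeal, RingHom.mem_ker] at hf
  have h := LinearMap.congr_fun hcomp f
  rw [LinearMap.comp_apply, AlgHom.toLinearMap_apply, hf, map_zero] at h
  exact Ideal.Quotient.eq_zero_iff_mem.1 h.symm
end

section
/- Let Q be a finite poset, K a field, and let P be a finite poset that is order-isomorphic to a disjoint sum P₁ + P₂ + ⋯ + P_r of finite posets each of which is rooted or co-rooted. Then the ideal J_{P,Q} is generated by squarefree binomials. -/
open MvPolynomial

/-- A finite poset is rooted if it has a least element and any two elements with a
common upper bound are comparable. -/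
def IsRooted (P : Type) [PartialOrder P] : Prop :=
  (∃ p₀ : P, ∀ x : P, p₀ ≤ x) ∧ ∀ a b c : P, a ≤ c → b ≤ c → a ≤ b ∨ b ≤ a

/-- A finite poset is co-rooted if its order dual is rooted. -/
def IsCorooted (P : Type) [PartialOrder P] : Prop :=
  (∃ p₀ : P, ∀ x : P, x ≤ p₀) ∧ ∀ a b c : P, c ≤ a → c ≤ b → a ≤ b ∨ b ≤ a

section helpers

open Equiv

theorem perm_sign_of_no_invariant {ι : Type} [Fintype ι] [DecidableEq ι] (σ : Perm ι)
    (i j : ι) (hij : i ≠ j)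
    (h : ¬ ∃ s : ι → Prop, (∃ x, s x) ∧ (∃ y, ¬ s y) ∧ ∀ x, s (σ x) ↔ s x) :
    Perm.sign σ = -(-1) ^ Fintype.card ι := by
  have hsc : ∀ x y, σ.SameCycle x y := by
    intro x y
    by_contra hxy
    exact h ⟨fun z => σ.SameCycle x z, ⟨x, Perm.SameCycle.refl _ _⟩, ⟨y, hxy⟩,
      fun z => Perm.sameCycle_apply_right⟩
  have hmv : ∀ x, σ x ≠ x := by
    intro x hx
    have h1 := (hsc x i).eq_of_left hx
    have h2 := (hsc x j).eq_of_left hx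
    exact hij (h1.symm.trans h2)
  have hc : σ.IsCycle := ⟨i, hmv i, fun y _ => hsc i y⟩
  have hs : σ.support = Finset.univ := by
    ext x; simp [hmv x]
  rw [hc.sign, hs, Finset.card_univ]

theorem exists_invariant {ι : Type} [Fintype ι] [DecidableEq ι] (σ : Perm ι)
    (i j : ι) (hij : i ≠ j) :
    (∃ s : ι → Prop, (∃ x, s x) ∧ (∃ y, ¬ s y) ∧ ∀ x, s (σ x) ↔ s x) ∨
    (∃ s : ι → Prop, (∃ x, s x) ∧ (∃ y, ¬ s y) ∧ ∀ x, s ((σ * swap i j) x) ↔ s x) := by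
  by_contra hcon
  push Not at hcon
  have h1 := perm_sign_of_no_invariant σ i j hij (by push Not; exact hcon.1)
  have h2 := perm_sign_of_no_invariant (σ * swap i j) i j hij (by push Not; exact hcon.2)
  rw [Perm.sign_mul, Perm.sign_swap hij, h1] at h2
  have : ∀ u : ℤˣ, u * -1 ≠ u := by decide
  exact this _ h2

variable {K P Q : Type} [Field K] [PartialOrder P] [Fintype P] [PartialOrder Q] [Fintype Q]

/-- The ideal generated by squarefree binomials. -/
noncomputable def sqIdeal (K P Q : Type) [Field K] [PartialOrder P] [Fintype P]
    [PartialOrder Q] [Fintype Q] : Ideal (MvPolynomial (P →o Q) K) :=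
  Ideal.span {f | f ∈ isotonianIdeal K P Q ∧ IsSquarefreeBinomial f}

theorem map_prod_X {ι : Type} [Fintype ι] (φ : ι → (P →o Q)) :
    isotonianMap K P Q (∏ i, X (φ i)) = ∏ p : P, ∏ i, X (p, φ i p) := by
  rw [map_prod, Finset.prod_comm]
  simp [isotonianMap]

theorem prod_X_eq {ι σ : Type} [Fintype ι] (φ : ι → σ) :
    (∏ i, X (φ i) : MvPolynomial σ K) = monomial (∑ i, Finsupp.single (φ i) 1) 1 := by
  rw [monomial_sum_one]; rfl

theorem exp_le_one {ι σ : Type} [Fintype ι] (φ : ι → σ) (h : Function.Injective φ) (x : σ) :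
    (∑ i, Finsupp.single (φ i) 1 : σ →₀ ℕ) x ≤ 1 := by
  classical
  rw [Finsupp.finsetSum_apply]
  simp only [Finsupp.single_apply]
  rw [← Finset.card_filter, Finset.card_le_one]
  intro a ha b hb
  simp at ha hb
  exact h (ha.trans hb.symm)

theorem move (U : Set P) : ∀ (n : ℕ) (ι : Type) [Fintype ι] (_ : Fintype.card ι = n)
    (φ φ' : ι → (P →o Q)) (σ : Perm ι)
    (_ : ∀ i, ∀ p ∉ U, φ' i p = φ i p) (_ : ∀ i, ∀ p ∈ U, φ' i p = φ (σ i) p),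
    (∏ i, X (φ i) - ∏ i, X (φ' i) : MvPolynomial (P →o Q) K) ∈ sqIdeal K P Q := by
  intro n
  induction n using Nat.strong_induction_on with
  | _ n ih =>
  intro ι _ hn φ φ' σ h1 h2
  classical
  by_cases hinj : ∀ i j, (∀ p ∉ U, φ i p = φ j p) → i = j
  · apply Ideal.subset_span
    refine ⟨?_, ?_⟩
    · rw [isotonianIdeal, RingHom.mem_ker, map_sub, map_prod_X, map_prod_X, sub_eq_zero]
      refine Finset.prod_congr rfl fun p _ => ?_
      by_cases hp : p ∈ U
      · simp only [h2 _ p hp]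
        exact (Equiv.prod_comp σ (fun i => (X (p, φ i p) : MvPolynomial (P × Q) K))).symm
      · simp only [h1 _ p hp]
    · refine ⟨_, _, exp_le_one φ ?_, exp_le_one φ' ?_, by rw [prod_X_eq, prod_X_eq]⟩
      · intro i j hij
        exact hinj i j fun p _ => by rw [hij]
      · intro i j hij
        exact hinj i j fun p hp => by rw [← h1 i p hp, ← h1 j p hp, hij]
  · push Not at hinj
    obtain ⟨i, j, hij, hne⟩ := hinj
    -- splitting along an invariant predicate
    have key : ∀ (φ'' : ι → (P →o Q)) (τ : Perm ι)
        (_ : ∀ i, ∀ p ∉ U, φ'' i p = φ i p) (_ : ∀ i, ∀ p ∈ U, φ'' i p = φ (τ i) p),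
        (∃ s : ι → Prop, (∃ x, s x) ∧ (∃ y, ¬ s y) ∧ ∀ x, s (τ x) ↔ s x) →
        (∏ i, X (φ i) - ∏ i, X (φ'' i) : MvPolynomial (P →o Q) K) ∈ sqIdeal K P Q := by
      rintro φ'' τ g1 g2 ⟨s, ⟨x, hx⟩, ⟨y, hy⟩, hs⟩
      have c1 : Fintype.card {i // s i} < n := hn ▸ Fintype.card_subtype_lt hy
      have c2 : Fintype.card {i // ¬ s i} < n :=
        hn ▸ Fintype.card_subtype_lt (p := fun i => ¬ s i) (x := x) (by simpa using hx)
      have m1 := ih _ c1 {i // s i} rfl (fun i => φ i) (fun i => φ'' i)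
        (τ.subtypePerm hs) (fun i p hp => g1 i p hp) (fun i p hp => g2 i p hp)
      have m2 := ih _ c2 {i // ¬ s i} rfl (fun i => φ i) (fun i => φ'' i)
        (τ.subtypePerm fun x => not_congr (hs x)) (fun i p hp => g1 i p hp)
        (fun i p hp => g2 i p hp)
      rw [← Fintype.prod_subtype_mul_prod_subtype s (fun i => (X (φ i) : MvPolynomial (P →o Q) K)),
        ← Fintype.prod_subtype_mul_prod_subtype s (fun i => (X (φ'' i) : MvPolynomial (P →o Q) K))]
      have := Ideal.add_mem _ (Ideal.mul_mem_right (∏ i : {i // ¬ s i}, X (φ i)) _ m1)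
        (Ideal.mul_mem_left _ (∏ i : {i // s i}, X (φ'' i)) m2)
      convert this using 1
      ring
    rcases exists_invariant σ i j hne with h | h
    · exact key φ' σ h1 h2 h
    · have := key (fun k => φ' (swap i j k)) (σ * swap i j) ?_ ?_ h
      · rwa [Equiv.prod_comp (swap i j) (fun k => (X (φ' k) : MvPolynomial (P →o Q) K))] at this
      · intro k p hp
        rw [h1 _ p hp]
        by_cases hk : k = i
        · subst hk; simp [hij p hp]
        by_cases hk' : k = j
        · subst hk'; simp [hij p hp]
        rw [swap_apply_of_ne_of_ne hk hk']
      · intro k p hp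
        simpa using h2 (swap i j k) p hp

theorem connect (R : P → Prop) (hR : ∀ x y, x ≤ y → (R x ↔ R y))
    (hd : ∀ a b c, R c → a ≤ c → b ≤ c → a ≤ b ∨ b ≤ a)
    (hu : ∀ a b c, ¬ R c → c ≤ a → c ≤ b → a ≤ b ∨ b ≤ a)
    {ι : Type} [Fintype ι] (ψ : ι → (P →o Q)) :
    ∀ (n : ℕ) (D : Finset P) (_ : (Fintype.card P - D.card) = n)
    (_ : ∀ x ∈ D, ∀ y, (R x ∧ y ≤ x) ∨ (¬ R x ∧ x ≤ y) → y ∈ D)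
    (φ : ι → (P →o Q)) (_ : ∀ p, ∃ σ : Perm ι, ∀ i, φ (σ i) p = ψ i p)
    (_ : ∀ p ∈ D, ∀ i, φ i p = ψ i p),
    (∏ i, X (φ i) - ∏ i, X (ψ i) : MvPolynomial (P →o Q) K) ∈ sqIdeal K P Q := by
  classical
  intro n
  induction n with
  | zero =>
    intro D hD _ φ _ hφ
    have hD' : D = Finset.univ := by
      rw [← Finset.card_eq_iff_eq_univ]
      have := Finset.card_le_univ D
      omega
    have : φ = ψ := by
      funext i; ext p
      exact hφ p (by simp [hD']) i
    simp [this]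
  | succ n ih =>
    intro D hD hcl φ hperm hφ
    -- a minimal element of the complement
    let lt : P → P → Prop := fun x y => (R y ∧ x < y) ∨ (¬ R y ∧ y < x)
    have htr : IsTrans P lt := ⟨by
      rintro a b c (⟨h1, h2⟩ | ⟨h1, h2⟩) (⟨h3, h4⟩ | ⟨h3, h4⟩)
      · exact Or.inl ⟨h3, h2.trans h4⟩
      · exact absurd ((hR _ _ h4.le).2 h1) h3
      · exact absurd ((hR _ _ h4.le).2 h3) h1
      · exact Or.inr ⟨h3, h4.trans h2⟩⟩
    have hirr : Std.Irrefl lt := ⟨by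
      rintro a (⟨_, h⟩ | ⟨_, h⟩) <;> exact lt_irrefl _ h⟩
    have hwf : WellFounded lt := Finite.wellFounded_of_trans_of_irrefl lt
    have hne : {x : P | x ∉ D}.Nonempty := by
      by_contra h
      have : D = Finset.univ := by
        ext x; simp
        by_contra hx
        exact h ⟨x, hx⟩
      rw [this] at hD
      simp at hD
    obtain ⟨c, hc, hmin⟩ := hwf.has_min _ hne
    have hc : c ∉ D := hc
    have hmin : ∀ x, lt x c → x ∈ D := fun x hx => by
      by_contra h
      exact hmin x h hx
    let U : Set P := {y | (R c ∧ c ≤ y) ∨ (¬ R c ∧ y ≤ c)}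
    have hcU : c ∈ U := by
      by_cases h : R c
      · exact Or.inl ⟨h, le_rfl⟩
      · exact Or.inr ⟨h, le_rfl⟩
    have hUD : ∀ y ∈ U, y ∉ D := by
      rintro y (⟨h1, h2⟩ | ⟨h1, h2⟩) hy
      · exact hc (hcl y hy c (Or.inl ⟨(hR _ _ h2).1 h1, h2⟩))
      · exact hc (hcl y hy c (Or.inr ⟨fun h => h1 ((hR _ _ h2).1 h), h2⟩))
    have hup : ∀ x ∉ U, ∀ y ∈ U, x ≤ y → x ∈ D ∧ x ≤ c ∧ c ≤ y := by
      rintro x hx y (⟨h1, h2⟩ | ⟨h1, h2⟩) hxy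
      · rcases hd x c y ((hR _ _ h2).1 h1) hxy h2 with h | h
        · refine ⟨hmin x (Or.inl ⟨h1, lt_of_le_of_ne h ?_⟩), h, h2⟩
          rintro rfl; exact hx hcU
        · exact absurd (Or.inl ⟨h1, h⟩) hx
      · exact absurd (Or.inr ⟨h1, hxy.trans h2⟩) hx
    have hdn : ∀ x ∉ U, ∀ y ∈ U, y ≤ x → x ∈ D ∧ y ≤ c ∧ c ≤ x := by
      rintro x hx y (⟨h1, h2⟩ | ⟨h1, h2⟩) hxy
      · exact absurd (Or.inl ⟨h1, h2.trans hxy⟩) hx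
      · rcases hu x c y (fun h => h1 ((hR _ _ h2).1 h)) hxy h2 with h | h
        · exact absurd (Or.inr ⟨h1, h⟩) hx
        · refine ⟨hmin x (Or.inr ⟨h1, lt_of_le_of_ne h ?_⟩), h2, h⟩
          rintro rfl; exact hx hcU
    obtain ⟨σ, hσ⟩ := hperm c
    let φ' : ι → (P →o Q) := fun i =>
      { toFun := fun p => if p ∈ U then φ (σ i) p else φ i p
        monotone' := by
          intro x y hxy
          by_cases hx : x ∈ U <;> by_cases hy : y ∈ U <;> simp only [hx, hy, if_true, if_false]
          · exact (φ (σ i)).monotone hxy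
          · obtain ⟨g1, g2, g3⟩ := hdn y hy x hx hxy
            calc φ (σ i) x ≤ φ (σ i) c := (φ (σ i)).monotone g2
              _ = ψ i c := hσ i
              _ ≤ ψ i y := (ψ i).monotone g3
              _ = φ i y := (hφ y g1 i).symm
          · obtain ⟨g1, g2, g3⟩ := hup x hx y hy hxy
            calc φ i x = ψ i x := hφ x g1 i
              _ ≤ ψ i c := (ψ i).monotone g2
              _ = φ (σ i) c := (hσ i).symm
              _ ≤ φ (σ i) y := (φ (σ i)).monotone g3
          · exact (φ i).monotone hxy }
    have e1 : ∀ i, ∀ p ∉ U, φ' i p = φ i p := fun i p hp => if_neg hp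
    have e2 : ∀ i, ∀ p ∈ U, φ' i p = φ (σ i) p := fun i p hp => if_pos hp
    have m1 := move (K := K) U _ ι rfl φ φ' σ e1 e2
    have m2 := ih (insert c D) (by rw [Finset.card_insert_of_notMem hc]; omega) ?_ φ' ?_ ?_
    · have := Ideal.add_mem _ m1 m2
      simpa using this
    · intro x hx y hxy
      rw [Finset.mem_insert] at hx ⊢
      rcases hx with rfl | hx
      · by_cases hyx : y = x
        · exact Or.inl hyx
        right
        apply hmin
        rcases hxy with ⟨h1, h2⟩ | ⟨h1, h2⟩
        · exact Or.inl ⟨h1, lt_of_le_of_ne h2 hyx⟩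
        · exact Or.inr ⟨h1, lt_of_le_of_ne h2 (Ne.symm hyx)⟩
      · exact Or.inr (hcl x hx y hxy)
    · intro p
      obtain ⟨τ, hτ⟩ := hperm p
      by_cases hp : p ∈ U
      · refine ⟨σ⁻¹ * τ, fun i => ?_⟩
        rw [e2 _ p hp]
        simpa using hτ i
      · exact ⟨τ, fun i => by rw [e1 _ p hp]; exact hτ i⟩
    · intro p hp i
      rw [Finset.mem_insert] at hp
      rcases hp with rfl | hp
      · rw [e2 i p hcU]; exact hσ i
      · rw [e1 i p fun h => hUD p h hp]; exact hφ p hp i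

/-- exponent vector of the image monomial -/
noncomputable def expo (P Q : Type) [PartialOrder P] [Fintype P]
    [PartialOrder Q] [Fintype Q] (u : (P →o Q) →₀ ℕ) : (P × Q) →₀ ℕ :=
  u.sum fun φ k => k • ∑ p : P, Finsupp.single (p, φ p) 1

theorem map_monomial_one (u : (P →o Q) →₀ ℕ) :
    isotonianMap K P Q (monomial u 1) = monomial (expo P Q u) 1 := by
  rw [isotonianMap, aeval_monomial, expo, Finsupp.sum, monomial_sum_one, map_one, one_mul,
    Finsupp.prod]
  refine Finset.prod_congr rfl fun φ _ => ?_
  rw [prod_X_eq, monomial_pow, one_pow]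

theorem ideal_eq_of_fibers
    (h : ∀ u v : (P →o Q) →₀ ℕ, expo P Q u = expo P Q v →
      (monomial u 1 - monomial v 1 : MvPolynomial (P →o Q) K) ∈ sqIdeal K P Q) :
    isotonianIdeal K P Q = sqIdeal K P Q := by
  apply le_antisymm
  · intro f hf
    let I := sqIdeal K P Q
    let s : ((P × Q) →₀ ℕ) → ((P →o Q) →₀ ℕ) := Function.invFun (expo P Q)
    let L : MvPolynomial (P × Q) K →ₗ[K] (MvPolynomial (P →o Q) K ⧸ I) :=
      (basisMonomials (P × Q) K).constr K fun m => Ideal.Quotient.mk I (monomial (s m) 1)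
    have hL : L ∘ₗ (isotonianMap K P Q).toLinearMap = (Ideal.Quotient.mkₐ K I).toLinearMap := by
      apply (basisMonomials (P →o Q) K).ext
      intro u
      have h1 : L (monomial (expo P Q u) 1) =
          Ideal.Quotient.mk I (monomial (s (expo P Q u)) 1) := by
        have := (basisMonomials (P × Q) K).constr_basis K
          (fun m => Ideal.Quotient.mk I (monomial (s m) 1)) (expo P Q u)
        rwa [coe_basisMonomials] at this
      simp only [coe_basisMonomials, LinearMap.comp_apply, AlgHom.toLinearMap_apply,
        map_monomial_one, h1, Ideal.Quotient.mkₐ_eq_mk]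
      rw [Ideal.Quotient.eq]
      exact h _ _ (Function.invFun_eq ⟨u, rfl⟩)
    have := LinearMap.congr_fun hL f
    have hf0 : isotonianMap K P Q f = 0 := hf
    simp only [LinearMap.comp_apply, AlgHom.toLinearMap_apply, hf0, map_zero,
      Ideal.Quotient.mkₐ_eq_mk] at this
    exact Ideal.Quotient.eq_zero_iff_mem.1 this.symm
  · exact Ideal.span_le.2 fun f hf => hf.1

/-- index type of a monomial -/
abbrev Idx {σ : Type} (u : σ →₀ ℕ) : Type := Σ x : σ, Fin (u x)

theorem monomial_eq_prod {σ : Type} [Fintype σ] (u : σ →₀ ℕ) :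
    (monomial u 1 : MvPolynomial σ K) = ∏ i : Idx u, X i.1 := by
  rw [Fintype.prod_sigma]
  simp only [Finset.prod_const, Finset.card_univ, Fintype.card_fin]
  rw [monomial_eq, map_one, one_mul, Finsupp.prod_fintype _ _ (by simp)]

theorem expo_apply [DecidableEq Q] [Fintype (P →o Q)] (u : (P →o Q) →₀ ℕ) (p : P) (q : Q) :
    expo P Q u (p, q) = Fintype.card {i : Idx u // i.1 p = q} := by
  classical
  rw [expo, Finsupp.sum_fintype _ _ (by simp), Finsupp.finsetSum_apply, Fintype.card_subtype,
    Finset.card_filter, Fintype.sum_sigma]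
  refine Finset.sum_congr rfl fun φ _ => ?_
  by_cases h : φ p = q <;> simp [Finsupp.single_apply, ite_and, h]

end helpers

/-- If `P` is order-isomorphic to the disjoint sum `P₁ + ⋯ + P_r` (the sigma type `Σ i, Pᵢ`
with its componentwise "disjoint sum" order) of posets each of which is rooted or
co-rooted, then `J_{P,Q}` is generated by the squarefree binomials it contains. -/
theorem statement8 (K P Q : Type) [Field K] [PartialOrder P] [Fintype P]
    [PartialOrder Q] [Fintype Q]
    (r : ℕ) (Pc : Fin r → Type) [∀ i, PartialOrder (Pc i)] [∀ i, Fintype (Pc i)]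
    (hPc : ∀ i, IsRooted (Pc i) ∨ IsCorooted (Pc i))
    (e : P ≃o (Σ i, Pc i)) :
    isotonianIdeal K P Q =
      Ideal.span {f | f ∈ isotonianIdeal K P Q ∧ IsSquarefreeBinomial f} := by
  classical
  have : Finite (P →o Q) := Finite.of_injective (fun f : P →o Q => (f : P → Q)) DFunLike.coe_injective
  have : Fintype (P →o Q) := Fintype.ofFinite _
  refine ideal_eq_of_fibers fun u v huv => ?_
  rcases isEmpty_or_nonempty P with hP | ⟨⟨p₀⟩⟩
  · -- no points: every variable is congruent to one
    have hX : ∀ φ : P →o Q, Ideal.Quotient.mk (sqIdeal K P Q) (X φ) = 1 := by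
      intro φ
      rw [← map_one (Ideal.Quotient.mk (sqIdeal K P Q)), Ideal.Quotient.eq]
      apply Ideal.subset_span
      refine ⟨?_, Finsupp.single φ 1, 0, ?_, by simp, by simp [X]⟩
      · rw [isotonianIdeal, RingHom.mem_ker]
        simp [isotonianMap]
      · intro i
        rw [Finsupp.single_apply]; split_ifs <;> simp
    rw [← Ideal.Quotient.eq, monomial_eq_prod, monomial_eq_prod, map_prod, map_prod]
    simp [hX]
  · have hcard : ∀ p q, Fintype.card {i : Idx u // i.1 p = q} =
        Fintype.card {i : Idx v // i.1 p = q} := fun p q => by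
      have h1 := expo_apply u p q
      rw [huv, expo_apply v p q] at h1
      convert h1.symm
    have heq : ∀ p, ∃ τ : Idx u ≃ Idx v, ∀ i, (τ i).1 p = i.1 p := by
      intro p
      refine ⟨(Equiv.sigmaFiberEquiv (fun i : Idx u => i.1 p)).symm.trans
        ((Equiv.sigmaCongrRight fun q => Fintype.equivOfCardEq (hcard p q)).trans
          (Equiv.sigmaFiberEquiv (fun i : Idx v => i.1 p))), fun i => ?_⟩
      exact (Fintype.equivOfCardEq (hcard p (i.1 p)) ⟨i, rfl⟩).2
    obtain ⟨τ₀, -⟩ := heq p₀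
    rw [monomial_eq_prod, monomial_eq_prod,
      ← Equiv.prod_comp τ₀ (fun i : Idx v => (X i.1 : MvPolynomial (P →o Q) K))]
    have hle : ∀ x y : P, x ≤ y ↔ e x ≤ e y := fun x y => (e.le_iff_le).symm
    refine connect (fun p => IsRooted (Pc (e p).1)) ?_ ?_ ?_ (fun i => (τ₀ i).1) _ ∅ rfl
      (by simp) _ ?_ (by simp)
    · intro x y hxy
      rw [hle] at hxy
      obtain ⟨h, -⟩ := Sigma.le_def.1 hxy
      rw [h]
    · intro a b c hc hac hbc
      rw [hle] at hac hbc
      rw [hle, hle]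
      revert hc hac hbc
      generalize e a = a, e b = b, e c = c
      rintro hc ⟨_, a, c, hac⟩ hbc
      cases hbc with
      | fiber _ b _ hbc =>
      exact (hc.2 a b c hac hbc).imp (fun h => Sigma.LE.fiber _ _ _ h) (fun h => Sigma.LE.fiber _ _ _ h)
    · intro a b c hc hac hbc
      rw [hle] at hac hbc
      rw [hle, hle]
      replace hc := (hPc (e c).1).resolve_left hc
      revert hc hac hbc
      generalize e a = a, e b = b, e c = c
      rintro ⟨_, c, a, hac⟩ hbc hc
      cases hbc with
      | fiber _ _ b hbc =>
      exact (hc.2 a b c hac hbc).imp (fun h => Sigma.LE.fiber _ _ _ h) (fun h => Sigma.LE.fiber _ _ _ h)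
    · intro p
      obtain ⟨τ, hτ⟩ := heq p
      refine ⟨τ₀.trans τ.symm, fun i => ?_⟩
      have := hτ (τ.symm (τ₀ i))
      simpa using this.symm
end
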